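/- Let W be a nonnegative random variable with 0 < E[W] < ∞, and let r_1, …, r_n > 0 satisfy ∏_{k=1}^n r_k = E[W]. Then there exists a unique Borel probability measure ν on (0,∞) such that for every n times continuously differentiable function g : (0,∞) → ℝ with both g and B_{r_1,…,r_n} g bounded and continuous on (0,∞), one has ∫_{(0,∞)} B_{r_1,…,r_n} g dν = E[W g(W)]. -/

import Mathlib

open MeasureTheory ProbabilityTheory Set

/-!
Uniqueness is a Mellin transform argument. The function `g x = Re (c x^{it})` is smooth and bounded
on `(0,∞)`, and `B g x = Re (c ∏ (r_k + i t) x^{it})`; as `r_k + i t ≠ 0`, the constant `c` can be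
chosen so that `B g x = Re (z x^{it})` for any prescribed `z`. Hence the characteristic function of
`log X`, for `X` of law `ν`, is determined by `W`, and so is `ν` (`eq_of_integral_mellinRe_eq`).

For existence, start from the size-biased law of `W` and multiply successively by independent
variables `U^{1/r_k}`, `U` uniform on `(0,1)`. Since
`d/du (u f(x u^{1/r})) = r⁻¹ (T_r f)(x u^{1/r})`, each step satisfies `∫ T_r f dν' = r ∫ f dν`
(`integral_betaMul`) as soon as `f` and `T_r f` are bounded.
The remaining point is that boundedness of `g` and `B g` forces that of every intermediate function
`T_{r_k} ⋯ T_{r_n} g`. Here `x^r f` has derivative `x^{r-1} T_r f`, so monotonicity shows that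
if `T_r f` is bounded then `f` is either bounded or tends to `±∞` at `0+`, and that if `T_r f`
tends to `±∞` at `0+` then so does `f` (up to sign). An unbounded intermediate function would
therefore make `g` itself blow up at `0+` (`bounded_of_steinT_bounded`).
-/

/-- The operator `T_r`, sending `f` to `x ↦ x f'(x) + r f(x)`. -/
noncomputable def steinT (r : ℝ) (f : ℝ → ℝ) : ℝ → ℝ := fun x => x * deriv f x + r * f x

/-- The iterated operator `B_{r₁,…,rₙ} = T_{r₁} ∘ ⋯ ∘ T_{rₙ}`. -/
noncomputable def steinB {n : ℕ} (r : Fin n → ℝ) (f : ℝ → ℝ) : ℝ → ℝ :=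
  (List.ofFn r).foldr steinT f

open Filter Topology

/-! ### Regularity -/

lemma contDiffOn_steinT {r : ℝ} {f : ℝ → ℝ} {k : ℕ} (hf : ContDiffOn ℝ (k + 1 : ℕ) f (Ioi 0)) :
    ContDiffOn ℝ k (steinT r f) (Ioi 0) := by
  have h1 : ContDiffOn ℝ k (deriv f) (Ioi 0) :=
    hf.deriv_of_isOpen isOpen_Ioi (by norm_cast)
  have h2 : ContDiffOn ℝ k f (Ioi 0) := hf.of_le (by norm_cast; omega)
  exact (contDiffOn_id.mul h1).add (contDiffOn_const.mul h2)

lemma contDiffOn_foldr (l : List ℝ) {f : ℝ → ℝ} {k : ℕ}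
    (hf : ContDiffOn ℝ (l.length + k : ℕ) f (Ioi 0)) :
    ContDiffOn ℝ k (l.foldr steinT f) (Ioi 0) := by
  induction l generalizing k with
  | nil => simpa using hf
  | cons r l ih =>
    simp only [List.foldr_cons]
    apply contDiffOn_steinT
    apply ih
    convert hf using 2
    simp only [List.length_cons]
    omega

lemma steinT_neg (r : ℝ) (f : ℝ → ℝ) (x : ℝ) :
    steinT r (fun y => -f y) x = -steinT r f x := by
  simp only [steinT, deriv.fun_neg]
  ring

/-! ### Boundedness of the intermediate functions -/

/-- With `T_r (f - K) ≥ 0`, the function `x^r (f - K)` is monotone: if it is negative somewhere then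
it stays away from `0` near `0+`, which makes `f` diverge. -/
lemma lower_or_atBot {r x₀ K : ℝ} {f : ℝ → ℝ} (hr : 0 < r)
    (hf : DifferentiableOn ℝ f (Ioi 0))
    (h : ∀ x ∈ Ioc 0 x₀, r * K ≤ steinT r f x) :
    (∀ x ∈ Ioc 0 x₀, K ≤ f x) ∨ Tendsto f (𝓝[>] 0) atBot := by
  by_cases hK : ∀ x ∈ Ioc 0 x₀, K ≤ f x
  · exact Or.inl hK
  right
  push Not at hK
  obtain ⟨x₁, hx₁, hfx⟩ := hK
  set u : ℝ → ℝ := fun x => x ^ r * (f x - K) with hu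
  have hd : ∀ x, 0 < x → HasDerivAt u (x ^ (r - 1) * (steinT r f x - r * K)) x := by
    intro x hx
    have h1 : HasDerivAt f (deriv f x) x :=
      ((hf x hx).differentiableAt (Ioi_mem_nhds hx)).hasDerivAt
    have h2 := (Real.hasDerivAt_rpow_const (x := x) (p := r) (Or.inl hx.ne')).mul (h1.sub_const K)
    refine h2.congr_deriv ?_
    have h3 : x ^ r = x ^ (r - 1) * x := by
      rw [Real.rpow_sub_one hx.ne']; field_simp
    rw [h3, steinT]; ring
  have hmono : MonotoneOn u (Ioc 0 x₀) := by
    apply monotoneOn_of_deriv_nonneg (convex_Ioc 0 x₀)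
    · exact fun x hx => (hd x hx.1).continuousAt.continuousWithinAt
    · rw [interior_Ioc]
      exact fun x hx => (hd x hx.1).differentiableAt.differentiableWithinAt
    · rw [interior_Ioc]
      intro x hx
      rw [(hd x hx.1).deriv]
      exact mul_nonneg (Real.rpow_nonneg hx.1.le _)
        (sub_nonneg.2 (h x ⟨hx.1, hx.2.le⟩))
  have hneg : u x₁ < 0 :=
    mul_neg_of_pos_of_neg (Real.rpow_pos_of_pos hx₁.1 _) (sub_neg.2 hfx)
  have hle : ∀ᶠ x in 𝓝[>] (0 : ℝ), f x ≤ u x₁ * x ^ (-r) + K := by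
    filter_upwards [Ioc_mem_nhdsGT hx₁.1] with x hx
    have h1 : u x ≤ u x₁ := hmono ⟨hx.1, hx.2.trans hx₁.2⟩ hx₁ hx.2
    have h2 : 0 < x ^ r := Real.rpow_pos_of_pos hx.1 _
    have h3 : f x - K ≤ u x₁ * x ^ (-r) := by
      rw [Real.rpow_neg hx.1.le, ← div_eq_mul_inv, le_div_iff₀ h2, mul_comm]
      exact h1
    linarith
  refine tendsto_atBot_mono' _ hle ?_
  apply tendsto_atBot_add_const_right
  exact (tendsto_rpow_neg_nhdsGT_zero (by linarith)).const_mul_atTop_of_neg hneg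

lemma upper_or_atTop {r x₀ K : ℝ} {f : ℝ → ℝ} (hr : 0 < r)
    (hf : DifferentiableOn ℝ f (Ioi 0))
    (h : ∀ x ∈ Ioc 0 x₀, steinT r f x ≤ r * K) :
    (∀ x ∈ Ioc 0 x₀, f x ≤ K) ∨ Tendsto f (𝓝[>] 0) atTop := by
  rcases lower_or_atBot (K := -K) (x₀ := x₀) hr hf.fun_neg
    (fun x hx => by rw [steinT_neg]; linarith [h x hx]) with h | h
  · exact Or.inl fun x hx => by linarith [h x hx]
  · exact Or.inr (tendsto_neg_atBot_iff.1 h)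

/-- Divergence to `±∞` at `0+`. -/
def BlowsUp (f : ℝ → ℝ) : Prop := Tendsto f (𝓝[>] 0) atBot ∨ Tendsto f (𝓝[>] 0) atTop

lemma BlowsUp.of_neg {f : ℝ → ℝ} (h : BlowsUp fun x => -f x) : BlowsUp f :=
  h.elim (fun h => Or.inr (tendsto_neg_atBot_iff.1 h))
    (fun h => Or.inl (tendsto_neg_atTop_iff.1 h))

lemma blowsUp_of_steinT_atTop {r : ℝ} {f : ℝ → ℝ} (hr : 0 < r)
    (hf : DifferentiableOn ℝ f (Ioi 0)) (h : Tendsto (steinT r f) (𝓝[>] 0) atTop) :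
    BlowsUp f := by
  by_cases hb : Tendsto f (𝓝[>] 0) atBot
  · exact Or.inl hb
  right
  rw [tendsto_atTop]
  intro K
  obtain ⟨x₀, hx₀, hs⟩ := (mem_nhdsGT_iff_exists_Ioc_subset).1 (tendsto_atTop.1 h (r * K))
  rcases lower_or_atBot hr hf (fun x hx => hs hx) with h1 | h1
  · filter_upwards [Ioc_mem_nhdsGT hx₀] with x hx using h1 x hx
  · exact absurd h1 hb

lemma BlowsUp.of_steinT {r : ℝ} {f : ℝ → ℝ} (hr : 0 < r)
    (hf : DifferentiableOn ℝ f (Ioi 0)) (h : BlowsUp (steinT r f)) : BlowsUp f := by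
  rcases h with h | h
  · apply BlowsUp.of_neg
    apply blowsUp_of_steinT_atTop hr hf.fun_neg
    have : steinT r (fun x => -f x) = fun x => -steinT r f x := funext (steinT_neg r f)
    rw [this]
    exact tendsto_neg_atTop_iff.2 h
  · exact blowsUp_of_steinT_atTop hr hf h

lemma BlowsUp.of_foldr {l : List ℝ} (hl : ∀ r ∈ l, 0 < r) {g : ℝ → ℝ}
    (hg : ContDiffOn ℝ (l.length : ℕ) g (Ioi 0)) (h : BlowsUp (l.foldr steinT g)) :
    BlowsUp g := by
  induction l with
  | nil => exact h
  | cons r l ih =>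
    have h1 : ContDiffOn ℝ (1 : ℕ) (l.foldr steinT g) (Ioi 0) := contDiffOn_foldr l hg
    refine ih (fun s hs => hl s (List.mem_cons_of_mem _ hs)) (hg.of_le ?_) ?_
    · simp only [List.length_cons]
      norm_cast
      omega
    · exact BlowsUp.of_steinT (hl r List.mem_cons_self)
        (h1.differentiableOn (by simp)) h

lemma not_blowsUp_of_bounded {g : ℝ → ℝ} {C : ℝ} (hC : ∀ x ∈ Ioi (0 : ℝ), |g x| ≤ C) :
    ¬ BlowsUp g := by
  rintro (h | h)
  · obtain ⟨x, hx, hx0⟩ := ((h.eventually_lt_atBot (-C)).and self_mem_nhdsWithin).exists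
    linarith [(abs_le.1 (hC x hx0)).1]
  · obtain ⟨x, hx, hx0⟩ := ((h.eventually_gt_atTop C).and self_mem_nhdsWithin).exists
    linarith [(abs_le.1 (hC x hx0)).2]

lemma bounded_of_steinT_bounded {r C : ℝ} {f : ℝ → ℝ} (hr : 0 < r)
    (hf : DifferentiableOn ℝ f (Ioi 0)) (hC : ∀ x ∈ Ioi (0 : ℝ), |steinT r f x| ≤ C)
    (hb : ¬ BlowsUp f) : ∀ x ∈ Ioi (0 : ℝ), |f x| ≤ C / r := by
  intro x hx
  have hrC : r * (C / r) = C := by field_simp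
  rw [abs_le]
  constructor
  · rcases lower_or_atBot (x₀ := x) (K := -(C / r)) hr hf
      (fun y hy => by rw [mul_neg, hrC]; exact (abs_le.1 (hC y hy.1)).1) with h | h
    · exact h x ⟨hx, le_rfl⟩
    · exact absurd (Or.inl h) hb
  · rcases upper_or_atTop (x₀ := x) (K := C / r) hr hf
      (fun y hy => by rw [hrC]; exact (abs_le.1 (hC y hy.1)).2) with h | h
    · exact h x ⟨hx, le_rfl⟩
    · exact absurd (Or.inr h) hb

/-! ### Multiplication by an independent beta variable -/

/-- The identity `∫₀¹ (T_r f)(x u^{1/r}) du = r f(x)`. The integrand is the derivative of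
`r u f(x u^{1/r})`, which vanishes at `u = 0` because `f` is bounded. -/
lemma integral_steinT_rpow {r C C' x : ℝ} {f : ℝ → ℝ} (hr : 0 < r) (hx : 0 < x)
    (hf : ContDiffOn ℝ (1 : ℕ) f (Ioi 0)) (hC : ∀ x ∈ Ioi (0 : ℝ), |f x| ≤ C)
    (hC' : ∀ x ∈ Ioi (0 : ℝ), |steinT r f x| ≤ C') :
    ∫ u in Ioo (0 : ℝ) 1, steinT r f (x * u ^ (1 / r)) = r * f x := by
  have hdf : DifferentiableOn ℝ f (Ioi 0) := hf.differentiableOn (by simp)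
  have hTc : ContinuousOn (steinT r f) (Ioi 0) :=
    (contDiffOn_steinT (k := 0) hf).continuousOn
  have hpos : ∀ u : ℝ, 0 < u → 0 < x * u ^ (1 / r) := fun u hu =>
    mul_pos hx (Real.rpow_pos_of_pos hu _)
  have hpd : ∀ u : ℝ, 0 < u →
      HasDerivAt (fun u : ℝ => x * u ^ (1 / r)) (x * (1 / r * u ^ (1 / r - 1))) u := fun u hu =>
    (Real.hasDerivAt_rpow_const (x := u) (p := 1 / r) (Or.inl hu.ne')).const_mul x
  have hd : ∀ u : ℝ, 0 < u → HasDerivAt (fun u => r * (u * f (x * u ^ (1 / r))))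
      (steinT r f (x * u ^ (1 / r))) u := by
    intro u hu
    have h1 : HasDerivAt f (deriv f (x * u ^ (1 / r))) (x * u ^ (1 / r)) :=
      ((hdf _ (hpos u hu)).differentiableAt (Ioi_mem_nhds (hpos u hu))).hasDerivAt
    have h2 := ((hasDerivAt_id u).mul (HasDerivAt.comp u h1 (hpd u hu))).const_mul r
    refine h2.congr_deriv ?_
    have h3 : u ^ (1 / r) = u ^ (1 / r - 1) * u := by
      rw [Real.rpow_sub_one hu.ne']; field_simp
    simp only [steinT, id, Function.comp]
    generalize deriv f (x * u ^ (1 / r)) = D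
    generalize f (x * u ^ (1 / r)) = F
    rw [h3]
    field_simp
    ring
  have hint : IntervalIntegrable (fun u => steinT r f (x * u ^ (1 / r))) volume 0 1 := by
    rw [intervalIntegrable_iff_integrableOn_Ioo_of_le zero_le_one]
    refine IntegrableOn.of_bound (by simp) ?_ C' ?_
    · apply ContinuousOn.aestronglyMeasurable _ measurableSet_Ioo
      refine hTc.comp (t := Ioi 0) ?_ (fun u hu => hpos u hu.1)
      exact fun u hu => (hpd u hu.1).continuousAt.continuousWithinAt
    · exact (ae_restrict_iff' measurableSet_Ioo).2
        (Eventually.of_forall fun u hu => hC' _ (hpos u hu.1))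
  have h0 : Tendsto (fun u => r * (u * f (x * u ^ (1 / r)))) (𝓝[>] 0) (𝓝 0) := by
    have hz : Tendsto (fun u : ℝ => r * (u * C)) (𝓝[>] 0) (𝓝 0) := by
      have : Continuous fun u : ℝ => r * (u * C) := by fun_prop
      simpa using (this.tendsto 0).mono_left nhdsWithin_le_nhds
    refine squeeze_zero_norm' ?_ hz
    filter_upwards [self_mem_nhdsWithin] with u hu
    have hu' : (0 : ℝ) < u := hu
    rw [Real.norm_eq_abs, abs_mul, abs_mul, abs_of_pos hr, abs_of_pos hu']
    have := hC _ (hpos u hu)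
    gcongr
  have h1 : Tendsto (fun u => r * (u * f (x * u ^ (1 / r)))) (𝓝[<] 1) (𝓝 (r * f x)) := by
    have := (hd 1 one_pos).continuousAt.tendsto.mono_left (nhdsWithin_le_nhds (s := Iio 1))
    simpa using this
  have := intervalIntegral.integral_eq_sub_of_hasDerivAt_of_tendsto zero_lt_one
    (fun u hu => hd u hu.1) hint h0 h1
  rw [intervalIntegral.integral_of_le zero_le_one, integral_Ioc_eq_integral_Ioo] at this
  rw [this, sub_zero]

instance isProbabilityMeasure_unif :
    IsProbabilityMeasure ((volume : Measure ℝ).restrict (Ioo 0 1)) := ⟨by simp⟩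

/-- The law of `X U^{1/r}` with `X ∼ μ` and `U` uniform on `(0,1)` independent; `U^{1/r}` has the
`Beta(r,1)` distribution. -/
noncomputable def betaMul (r : ℝ) (μ : Measure ℝ) : Measure ℝ :=
  (μ.prod ((volume : Measure ℝ).restrict (Ioo 0 1))).map fun p => p.1 * p.2 ^ (1 / r)

lemma measurable_betaMul (r : ℝ) : Measurable fun p : ℝ × ℝ => p.1 * p.2 ^ (1 / r) := by
  fun_prop

instance isProbabilityMeasure_betaMul (r : ℝ) (μ : Measure ℝ) [IsProbabilityMeasure μ] :
    IsProbabilityMeasure (betaMul r μ) :=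
  Measure.isProbabilityMeasure_map (measurable_betaMul r).aemeasurable

lemma restrict_Ioi_eq {μ : Measure ℝ} (hμ : μ (Ioi 0)ᶜ = 0) : μ.restrict (Ioi 0) = μ :=
  Measure.restrict_eq_self_of_ae_mem (by rw [← mem_ae_iff] at hμ; exact hμ)

lemma betaMul_support {r : ℝ} {μ : Measure ℝ} [IsProbabilityMeasure μ] (hμ : μ (Ioi 0)ᶜ = 0) :
    betaMul r μ (Ioi 0)ᶜ = 0 := by
  rw [betaMul, Measure.map_apply (measurable_betaMul r) measurableSet_Ioi.compl, preimage_compl,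
    ← mem_ae_iff]
  have h1 : ∀ᵐ p ∂(μ.prod ((volume : Measure ℝ).restrict (Ioo 0 1))), p.1 ∈ Ioi (0 : ℝ) :=
    Measure.quasiMeasurePreserving_fst.ae (mem_ae_iff.2 hμ)
  have h2 : ∀ᵐ p ∂(μ.prod ((volume : Measure ℝ).restrict (Ioo 0 1))), p.2 ∈ Ioo (0 : ℝ) 1 :=
    Measure.quasiMeasurePreserving_snd.ae (ae_restrict_mem measurableSet_Ioo)
  filter_upwards [h1, h2] with p hp1 hp2
  exact mul_pos hp1 (Real.rpow_pos_of_pos hp2.1 _)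

lemma integral_betaMul {r C C' : ℝ} {f : ℝ → ℝ} {μ : Measure ℝ} [IsProbabilityMeasure μ]
    (hμ : μ (Ioi 0)ᶜ = 0) (hr : 0 < r)
    (hf : ContDiffOn ℝ (1 : ℕ) f (Ioi 0)) (hC : ∀ x ∈ Ioi (0 : ℝ), |f x| ≤ C)
    (hC' : ∀ x ∈ Ioi (0 : ℝ), |steinT r f x| ≤ C') :
    ∫ x, steinT r f x ∂(betaMul r μ) = r * ∫ x, f x ∂μ := by
  have hTc : ContinuousOn (steinT r f) (Ioi 0) :=
    (contDiffOn_steinT (k := 0) hf).continuousOn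
  have hs := betaMul_support (r := r) hμ
  have hm : AEStronglyMeasurable (steinT r f) (betaMul r μ) := by
    rw [← restrict_Ioi_eq hs]
    exact hTc.aestronglyMeasurable measurableSet_Ioi
  have hi : Integrable (steinT r f) (betaMul r μ) :=
    Integrable.of_bound hm C' (by
      filter_upwards [mem_ae_iff.2 hs] with x hx using hC' x hx)
  have hi' : Integrable (fun p : ℝ × ℝ => steinT r f (p.1 * p.2 ^ (1 / r)))
      (μ.prod ((volume : Measure ℝ).restrict (Ioo 0 1))) :=
    hi.comp_measurable (measurable_betaMul r)
  rw [betaMul, integral_map (measurable_betaMul r).aemeasurable hm, integral_prod _ hi',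
    ← integral_const_mul]
  apply integral_congr_ae
  filter_upwards [mem_ae_iff.2 hμ] with x hx
  exact integral_steinT_rpow hr hx hf hC hC'

lemma exists_biased {μ : Measure ℝ} [IsProbabilityMeasure μ] (hμ : μ (Ioi 0)ᶜ = 0)
    (l : List ℝ) (hl : ∀ r ∈ l, 0 < r) :
    ∃ ν : Measure ℝ, IsProbabilityMeasure ν ∧ ν (Ioi 0)ᶜ = 0 ∧
      ∀ g : ℝ → ℝ, ContDiffOn ℝ (l.length : ℕ) g (Ioi 0) →
        (∃ C, ∀ x ∈ Ioi (0 : ℝ), |g x| ≤ C) →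
        (∃ C, ∀ x ∈ Ioi (0 : ℝ), |l.foldr steinT g x| ≤ C) →
        ∫ x, l.foldr steinT g x ∂ν = l.prod * ∫ x, g x ∂μ := by
  induction l with
  | nil => exact ⟨μ, inferInstance, hμ, fun g _ _ _ => by simp⟩
  | cons r l ih =>
    have hr := hl r List.mem_cons_self
    have hl' : ∀ s ∈ l, 0 < s := fun s hs => hl s (List.mem_cons_of_mem _ hs)
    obtain ⟨ν, hν, hs, H⟩ := ih hl'
    refine ⟨betaMul r ν, inferInstance, betaMul_support hs, ?_⟩
    rintro g hg ⟨C, hC⟩ ⟨C', hC'⟩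
    have h1 : ContDiffOn ℝ (1 : ℕ) (l.foldr steinT g) (Ioi 0) := contDiffOn_foldr l hg
    have hg' : ContDiffOn ℝ (l.length : ℕ) g (Ioi 0) := hg.of_le (by
      simp only [List.length_cons]
      norm_cast
      omega)
    have hb := bounded_of_steinT_bounded hr (h1.differentiableOn (by simp)) hC'
      (fun h => not_blowsUp_of_bounded hC (BlowsUp.of_foldr hl' hg' h))
    rw [List.foldr_cons, integral_betaMul hs hr h1 hb hC', H g hg' ⟨C, hC⟩ ⟨_, hb⟩,
      List.prod_cons, mul_assoc]

/-! ### Size bias -/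

lemma exists_sizeBias {Ω : Type*} [MeasurableSpace Ω] {P : Measure Ω} {W : Ω → ℝ}
    (hWmeas : Measurable W) (hWnn : ∀ ω, 0 ≤ W ω)
    (hWint : Integrable W P) (hWpos : 0 < ∫ ω, W ω ∂P) :
    ∃ μ : Measure ℝ, IsProbabilityMeasure μ ∧ μ (Ioi 0)ᶜ = 0 ∧
      ∀ g : ℝ → ℝ, ContinuousOn g (Ioi 0) →
        (∫ ω, W ω ∂P) * ∫ x, g x ∂μ = ∫ ω, W ω * g (W ω) ∂P := by
  set m := ∫ ω, W ω ∂P with hm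
  have hdm : Measurable fun ω => ENNReal.ofReal (W ω / m) := by fun_prop
  have hprob : IsProbabilityMeasure (P.withDensity fun ω => ENNReal.ofReal (W ω / m)) := by
    constructor
    rw [withDensity_apply _ MeasurableSet.univ, Measure.restrict_univ,
      ← ofReal_integral_eq_lintegral_ofReal (hWint.div_const m)
        (Eventually.of_forall fun ω => div_nonneg (hWnn ω) hWpos.le),
      integral_div, ← hm, div_self hWpos.ne', ENNReal.ofReal_one]
  have hsupp : ((P.withDensity fun ω => ENNReal.ofReal (W ω / m)).map W) (Ioi 0)ᶜ = 0 := by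
    rw [Measure.map_apply hWmeas measurableSet_Ioi.compl,
      withDensity_apply _ (hWmeas measurableSet_Ioi.compl)]
    refine (setLIntegral_congr_fun (hWmeas measurableSet_Ioi.compl) (g := 0) ?_).trans (by simp)
    intro ω hω
    have : W ω = 0 := le_antisymm (by simpa using hω) (hWnn ω)
    simp [this]
  refine ⟨_, Measure.isProbabilityMeasure_map hWmeas.aemeasurable, hsupp, ?_⟩
  intro g hg
  rw [integral_map hWmeas.aemeasurable (by
      rw [← restrict_Ioi_eq hsupp]
      exact hg.aestronglyMeasurable measurableSet_Ioi),
    integral_withDensity_eq_integral_toReal_smul hdm (Eventually.of_forall fun _ => by simp),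
    ← integral_const_mul]
  congr 1 with ω
  rw [ENNReal.toReal_ofReal (div_nonneg (hWnn ω) hWpos.le), smul_eq_mul]
  field_simp

/-! ### Uniqueness through the Mellin transform -/

/-- The function `x ↦ Re (c x^{it})` for `x > 0`. -/
noncomputable def mellinRe (t : ℝ) (c : ℂ) (x : ℝ) : ℝ :=
  (c * Complex.exp (t * Real.log x * Complex.I)).re

lemma mellinRe_abs_le (t : ℝ) (c : ℂ) (x : ℝ) : |mellinRe t c x| ≤ ‖c‖ := by
  refine (Complex.abs_re_le_norm _).trans ?_
  rw [norm_mul, ← Complex.ofReal_mul, Complex.norm_exp_ofReal_mul_I, mul_one]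

lemma contDiffOn_mellinRe (t : ℝ) (c : ℂ) (k : ℕ) : ContDiffOn ℝ k (mellinRe t c) (Ioi 0) := by
  have hlog : ContDiffOn ℝ k Real.log (Ioi 0) :=
    Real.contDiffOn_log.mono (fun x hx => (ne_of_gt hx : x ≠ 0))
  have h1 : ContDiff ℝ k fun y : ℝ => (c * Complex.exp (t * y * Complex.I)).re := by
    refine Complex.reCLM.contDiff.comp (g := Complex.reCLM)
      (f := fun y : ℝ => c * Complex.exp (t * y * Complex.I)) ?_
    apply contDiff_const.mul
    apply ContDiff.cexp
    exact (contDiff_const.mul Complex.ofRealCLM.contDiff).mul contDiff_const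
  exact h1.comp_contDiffOn hlog

lemma steinT_mellinRe (r t : ℝ) (c : ℂ) {f : ℝ → ℝ} (hf : EqOn f (mellinRe t c) (Ioi 0)) :
    EqOn (steinT r f) (mellinRe t ((r + t * Complex.I) * c)) (Ioi 0) := by
  intro x hx
  have hx0 : (x : ℝ) ≠ 0 := ne_of_gt hx
  have hd : HasDerivAt (fun x : ℝ => c * Complex.exp (t * Real.log x * Complex.I))
      (c * (Complex.exp (t * Real.log x * Complex.I) * (t * ((x⁻¹ : ℝ) : ℂ) * Complex.I))) x :=
    ((((Real.hasDerivAt_log hx0).ofReal_comp.const_mul (t : ℂ)).mul_const Complex.I).cexp).const_mul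
      c
  have hd' : HasDerivAt (mellinRe t c) _ x :=
    Complex.reCLM.hasFDerivAt.comp_hasDerivAt x hd
  have he : deriv f x = deriv (mellinRe t c) x :=
    (hf.eventuallyEq_of_mem (Ioi_mem_nhds hx)).deriv_eq
  rw [steinT, he, hd'.deriv, hf hx]
  simp only [Complex.reCLM_apply, mellinRe]
  generalize Complex.exp (t * Real.log x * Complex.I) = e
  rw [← Complex.re_ofReal_mul, ← Complex.re_ofReal_mul, ← Complex.add_re]
  congr 1
  have : (x : ℂ) ≠ 0 := by exact_mod_cast hx0
  push_cast
  field_simp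
  ring

lemma foldr_mellinRe (l : List ℝ) (t : ℝ) (c : ℂ) :
    EqOn (l.foldr steinT (mellinRe t c))
      (mellinRe t ((l.map fun r : ℝ => (r + t * Complex.I : ℂ)).prod * c)) (Ioi 0) := by
  induction l with
  | nil => simp [EqOn]
  | cons r l ih =>
    rw [List.foldr_cons, List.map_cons, List.prod_cons, mul_assoc]
    exact steinT_mellinRe r t _ ih

/-- Every `x ↦ Re (z x^{it})` is the image under `B` of a bounded smooth function. -/
lemma exists_foldr_eq_mellinRe (l : List ℝ) (hl : ∀ r ∈ l, 0 < r) (t : ℝ) (z : ℂ) :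
    ∃ c : ℂ, EqOn (l.foldr steinT (mellinRe t c)) (mellinRe t z) (Ioi 0) := by
  have hne : (l.map fun r : ℝ => (r + t * Complex.I : ℂ)).prod ≠ 0 := by
    rw [Ne, List.prod_eq_zero_iff, List.mem_map]
    rintro ⟨r, hr, h⟩
    have := congrArg Complex.re h
    simp at this
    exact (hl r hr).ne' this
  refine ⟨(l.map fun r : ℝ => (r + t * Complex.I : ℂ)).prod⁻¹ * z, ?_⟩
  have := foldr_mellinRe l t ((l.map fun r : ℝ => (r + t * Complex.I : ℂ)).prod⁻¹ * z)
  rwa [mul_inv_cancel_left₀ hne] at this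

lemma integral_mellinRe {ν : Measure ℝ} [IsProbabilityMeasure ν] (t : ℝ) (z : ℂ) :
    ∫ x, mellinRe t z x ∂ν = (z * charFun (ν.map Real.log) t).re := by
  have hm : Measurable fun x : ℝ => Complex.exp (t * Real.log x * Complex.I) := by fun_prop
  have hi : Integrable (fun x : ℝ => Complex.exp (t * Real.log x * Complex.I)) ν :=
    Integrable.of_bound hm.aestronglyMeasurable 1 (Eventually.of_forall fun x => by
      rw [← Complex.ofReal_mul, Complex.norm_exp_ofReal_mul_I])
  rw [charFun_apply_real, integral_map Real.measurable_log.aemeasurable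
    (by fun_prop), ← integral_const_mul]
  exact integral_re (hi.const_mul z)

/-- A measure on `(0,∞)` is determined by its Mellin transform on the imaginary axis. -/
lemma eq_of_integral_mellinRe_eq {ν ν' : Measure ℝ}
    [IsProbabilityMeasure ν] [IsProbabilityMeasure ν']
    (hν : ν (Ioi 0)ᶜ = 0) (hν' : ν' (Ioi 0)ᶜ = 0)
    (h : ∀ t z, ∫ x, mellinRe t z x ∂ν = ∫ x, mellinRe t z x ∂ν') : ν = ν' := by
  have key : ∀ {μ : Measure ℝ}, μ (Ioi 0)ᶜ = 0 → (μ.map Real.log).map Real.exp = μ := by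
    intro μ hμ
    rw [Measure.map_map Real.measurable_exp Real.measurable_log]
    conv_rhs => rw [← Measure.map_id (μ := μ)]
    apply Measure.map_congr
    filter_upwards [mem_ae_iff.2 hμ] with x hx
    simp [Real.exp_log hx]
  have : IsProbabilityMeasure (ν.map Real.log) :=
    Measure.isProbabilityMeasure_map Real.measurable_log.aemeasurable
  have : IsProbabilityMeasure (ν'.map Real.log) :=
    Measure.isProbabilityMeasure_map Real.measurable_log.aemeasurable
  have : ν.map Real.log = ν'.map Real.log := by
    apply Measure.ext_of_charFun
    ext t
    -- `z = 1` gives the real part and `z = -i` the imaginary part.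
    have h1 := h t 1
    have h2 := h t (-Complex.I)
    rw [integral_mellinRe, integral_mellinRe] at h1 h2
    apply Complex.ext
    · simpa using h1
    · simpa using h2
  rw [← key hν, ← key (μ := ν') hν', this]

/-- Existence and uniqueness of the `W`-gamma biased distribution of order
`n`: for `W ≥ 0` with `0 < E[W] < ∞` and `r₁⋯rₙ = E[W]`, there is a unique Borel probability
measure `ν` on `(0,∞)` with `∫ B_{r₁,…,rₙ} g dν = E[W g(W)]` for all suitable `g`. -/
theorem stmt9
    {Ω : Type*} [MeasureSpace Ω] [IsProbabilityMeasure (ℙ : Measure Ω)]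
    {n : ℕ} (r : Fin n → ℝ) (hr : ∀ i, 0 < r i)
    (W : Ω → ℝ) (hWmeas : Measurable W) (hWnn : ∀ ω, 0 ≤ W ω)
    (hWint : Integrable W (ℙ : Measure Ω)) (hWpos : 0 < ∫ ω, W ω ∂(ℙ : Measure Ω))
    (hprod : (∏ k, r k) = ∫ ω, W ω ∂(ℙ : Measure Ω)) :
    ∃! ν : Measure ℝ, IsProbabilityMeasure ν ∧ ν (Set.Ioi (0 : ℝ))ᶜ = 0 ∧
      ∀ g : ℝ → ℝ, ContDiffOn ℝ n g (Set.Ioi 0) →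
        ContinuousOn g (Set.Ioi 0) → (∃ C, ∀ x ∈ Set.Ioi (0 : ℝ), |g x| ≤ C) →
        ContinuousOn (steinB r g) (Set.Ioi 0) →
        (∃ C, ∀ x ∈ Set.Ioi (0 : ℝ), |steinB r g x| ≤ C) →
        ∫ x in Set.Ioi (0 : ℝ), steinB r g x ∂ν = ∫ ω, W ω * g (W ω) ∂(ℙ : Measure Ω) := by
  have hl : ∀ s ∈ List.ofFn r, 0 < s := by
    intro s hs
    obtain ⟨i, rfl⟩ := (List.mem_ofFn' _ _).1 hs
    exact hr i
  refine existsUnique_of_exists_of_unique ?_ ?_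
  · obtain ⟨μ, hμp, hμ, hμi⟩ := exists_sizeBias hWmeas hWnn hWint hWpos
    obtain ⟨ν, hνp, hν, H⟩ := exists_biased hμ (List.ofFn r) hl
    refine ⟨ν, hνp, hν, ?_⟩
    intro g hg hgc hgb _ hBb
    rw [restrict_Ioi_eq hν, ← hμi g hgc, ← hprod, ← List.prod_ofFn]
    exact H g (by simpa using hg) hgb hBb
  · rintro ν ν' ⟨hp, hs, H⟩ ⟨hp', hs', H'⟩
    apply eq_of_integral_mellinRe_eq hs hs'
    intro t z
    obtain ⟨c, hc⟩ := exists_foldr_eq_mellinRe (List.ofFn r) hl t z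
    have hc' : EqOn (steinB r (mellinRe t c)) (mellinRe t z) (Ioi 0) := hc
    have hcont : ∀ w, ContinuousOn (mellinRe t w) (Ioi 0) := fun w =>
      (contDiffOn_mellinRe t w 0).continuousOn
    have hb : ∃ C, ∀ x ∈ Ioi (0 : ℝ), |steinB r (mellinRe t c) x| ≤ C :=
      ⟨‖z‖, fun x hx => by rw [hc' hx]; exact mellinRe_abs_le t z x⟩
    have e1 := H _ (contDiffOn_mellinRe t c n) (hcont c)
      ⟨‖c‖, fun x _ => mellinRe_abs_le t c x⟩ ((hcont z).congr hc') hb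
    have e2 := H' _ (contDiffOn_mellinRe t c n) (hcont c)
      ⟨‖c‖, fun x _ => mellinRe_abs_le t c x⟩ ((hcont z).congr hc') hb
    rw [setIntegral_congr_fun measurableSet_Ioi hc', restrict_Ioi_eq hs] at e1
    rw [setIntegral_congr_fun measurableSet_Ioi hc', restrict_Ioi_eq hs'] at e2
    rw [e1, e2]
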